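/- arXiv:1705.06957 — 4 statements merged into one kernel-verified Lean document; each statement's English description precedes it below -/
import Mathlib

section
/- Let 0 < q < 1. The functions F₁(z) = z·exp( Σ_{n≥1} (2 ln q/(qⁿ−1)) zⁿ ) and F₂(z) = z·exp( Σ_{n≥1} (2 ln q/(q^{2n}−1)) z^{2n} ) are well defined and analytic on the unit disk and both belong to the class S_q^*. -/
open Complex Metric

noncomputable section

/-- The open unit disk in ℂ. -/
def unitDisk : Set ℂ := ball 0 1

/-- The `q`-difference operator. -/
def Dq (q : ℝ) (f : ℂ → ℂ) (z : ℂ) : ℂ :=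
  if z = 0 then deriv f 0 else (f z - f (q * z)) / (z * (1 - q))

/-- The class `A` of normalized analytic functions on the unit disk. -/
def classA (f : ℂ → ℂ) : Prop :=
  DifferentiableOn ℂ f unitDisk ∧ f 0 = 0 ∧ deriv f 0 = 1

/-- The class of `q`-starlike functions. -/
def SqStar (q : ℝ) (f : ℂ → ℂ) : Prop :=
  classA f ∧ ∀ z ∈ unitDisk,
    ‖z * Dq q f z / f z - 1 / (1 - (q : ℂ))‖ ≤ 1 / (1 - q)

/-- The class of `q`-starlike functions of order `α`. -/
def SqStarAlpha (q α : ℝ) (f : ℂ → ℂ) : Prop :=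
  classA f ∧ ∀ z ∈ unitDisk,
    ‖(z * Dq q f z / f z - (α : ℂ)) / (1 - (α : ℂ)) - 1 / (1 - (q : ℂ))‖
      ≤ 1 / (1 - q)

/-- The class of `q`-convex functions of order `α`. -/
def CqAlpha (q α : ℝ) (f : ℂ → ℂ) : Prop :=
  classA f ∧ SqStarAlpha q α (fun z => z * Dq q f z)

/-!
Let `L w = ∑ wⁿ / (pⁿ - 1)`, which solves `L (p w) - L w = w / (1 - w)` on the unit disk, and put
`f z = z * exp (2 log q * L (zᵐ))` with `p = qᵐ`. Then
`f (q z) / f z = q * exp (2 log q * zᵐ / (1 - zᵐ))`, whose modulus is at most `1` because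
`w ↦ w / (1 - w)` maps the unit disk into the half-plane `Re > -1/2` and `log q < 0`. On the other
hand `z * Dq f z / f z - 1 / (1 - q) = -(f (q z) / f z) / (1 - q)`, so this bound is exactly the
defining inequality of `S_q^*`.
-/

/-- The `p`-logarithm series `∑ₙ wⁿ / (pⁿ - 1)` over `n ≥ 1`, shifted to start at `n = 0`: for
`‖p‖ < 1`, the power series without constant term solving `L (p w) - L w = w / (1 - w)` on the
unit disk. -/
def qLog {𝕜 : Type*} [NormedField 𝕜] (p w : 𝕜) : 𝕜 :=
  ∑' n : ℕ, w ^ (n + 1) / (p ^ (n + 1) - 1)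

section QLog

variable {𝕜 : Type*} [NormedField 𝕜] {p w : 𝕜}

lemma one_sub_norm_le_norm_pow_succ_sub_one (hp : ‖p‖ < 1) (n : ℕ) :
    1 - ‖p‖ ≤ ‖p ^ (n + 1) - 1‖ :=
  calc 1 - ‖p‖ ≤ 1 - ‖p‖ ^ (n + 1) :=
        sub_le_sub_left (pow_le_of_le_one (norm_nonneg p) hp.le n.succ_ne_zero) 1
    _ = ‖(1 : 𝕜)‖ - ‖p ^ (n + 1)‖ := by rw [norm_one, norm_pow]
    _ ≤ ‖1 - p ^ (n + 1)‖ := norm_sub_norm_le _ _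
    _ = ‖p ^ (n + 1) - 1‖ := norm_sub_rev _ _

lemma norm_pow_succ_div_pow_succ_sub_one_le (hp : ‖p‖ < 1) {r : ℝ} (hw : ‖w‖ ≤ r) (n : ℕ) :
    ‖w ^ (n + 1) / (p ^ (n + 1) - 1)‖ ≤ r ^ (n + 1) / (1 - ‖p‖) := by
  have hr : 0 ≤ r := (norm_nonneg w).trans hw
  rw [norm_div, norm_pow]
  have : 0 < 1 - ‖p‖ := sub_pos.2 hp
  gcongr
  exact one_sub_norm_le_norm_pow_succ_sub_one hp n

lemma summable_pow_succ_div_const {r : ℝ} (hr₀ : 0 ≤ r) (hr₁ : r < 1) (c : ℝ) :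
    Summable fun n : ℕ => r ^ (n + 1) / c :=
  ((summable_nat_add_iff 1).2 (summable_geometric_of_lt_one hr₀ hr₁)).div_const c

lemma summable_qLog [CompleteSpace 𝕜] (hp : ‖p‖ < 1) (hw : ‖w‖ < 1) :
    Summable fun n : ℕ => w ^ (n + 1) / (p ^ (n + 1) - 1) :=
  .of_norm_bounded (summable_pow_succ_div_const (norm_nonneg w) hw _)
    (norm_pow_succ_div_pow_succ_sub_one_le hp le_rfl)

lemma qLog_zero_right (p : 𝕜) : qLog p 0 = 0 := by
  simp [qLog]

lemma qLog_mul_sub_qLog [CompleteSpace 𝕜] (hp : ‖p‖ < 1) (hw : ‖w‖ < 1) :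
    qLog p (p * w) - qLog p w = w / (1 - w) := by
  have hpw : ‖p * w‖ < 1 := by
    rw [norm_mul]
    exact mul_lt_one_of_nonneg_of_lt_one_left (norm_nonneg p) hp hw.le
  have h_denom (n : ℕ) : p ^ (n + 1) - 1 ≠ 0 :=
    norm_pos_iff.1 ((sub_pos.2 hp).trans_le (one_sub_norm_le_norm_pow_succ_sub_one hp n))
  calc qLog p (p * w) - qLog p w
      = ∑' n : ℕ, ((p * w) ^ (n + 1) / (p ^ (n + 1) - 1) - w ^ (n + 1) / (p ^ (n + 1) - 1)) :=
        ((summable_qLog hp hpw).tsum_sub (summable_qLog hp hw)).symm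
    _ = ∑' n : ℕ, w * w ^ n := tsum_congr fun n => by
        rw [← sub_div, mul_pow, ← sub_one_mul, mul_div_cancel_left₀ _ (h_denom n), pow_succ']
    _ = w / (1 - w) := by rw [tsum_mul_left, tsum_geometric_of_norm_lt_one hw, div_eq_mul_inv]

end QLog

lemma differentiableOn_qLog {p : ℂ} (hp : ‖p‖ < 1) :
    DifferentiableOn ℂ (qLog p) unitDisk := by
  intro w hw
  obtain ⟨r, hwr, hr₁⟩ := exists_between (mem_ball_zero_iff.1 hw)
  have hr₀ : 0 ≤ r := (norm_nonneg w).trans hwr.le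
  have h_ball : DifferentiableOn ℂ (qLog p) (ball 0 r) :=
    differentiableOn_tsum_of_summable_norm (summable_pow_succ_div_const hr₀ hr₁ _)
      (fun n => by fun_prop) isOpen_ball fun n z hz =>
        norm_pow_succ_div_pow_succ_sub_one_le hp (mem_ball_zero_iff.1 hz).le n
  exact (h_ball.differentiableAt
    (isOpen_ball.mem_nhds (mem_ball_zero_iff.2 hwr))).differentiableWithinAt

lemma neg_half_lt_re_div_one_sub {w : ℂ} (hw : ‖w‖ < 1) : -1 / 2 < (w / (1 - w)).re := by
  have h_ne : 1 - w ≠ 0 := sub_ne_zero.2 fun h => by simp [← h] at hw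
  have h_normSq : normSq w < 1 := by
    rw [normSq_eq_norm_sq]
    exact pow_lt_one₀ (norm_nonneg w) hw two_ne_zero
  have h_pos : 0 < normSq (1 - w) := normSq_pos.2 h_ne
  have h_re : (w / (1 - w)).re + 1 / 2 = (1 - normSq w) / (2 * normSq (1 - w)) := by
    rw [div_re]
    field_simp
    simp only [normSq_apply, sub_re, sub_im, one_re, one_im]
    ring
  have : 0 < (1 - normSq w) / (2 * normSq (1 - w)) := div_pos (sub_pos.2 h_normSq) (by positivity)
  linarith

lemma mul_Dq_div_sub_one_div (q : ℝ) {f : ℂ → ℂ} {z : ℂ} (hz : z ≠ 0) (hf : f z ≠ 0) :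
    z * Dq q f z / f z - 1 / (1 - (q : ℂ)) = -(f (q * z) / f z) / (1 - (q : ℂ)) := by
  have h_quot : z * Dq q f z / f z = (1 - f (q * z) / f z) / (1 - (q : ℂ)) := by
    rw [Dq, if_neg hz, ← div_div, mul_div_assoc', mul_div_cancel₀ _ hz, div_right_comm, sub_div,
      div_self hf]
  rw [h_quot, ← sub_div, sub_sub_cancel_left]

lemma sqStar_of_norm_le {q : ℝ} (hq : q < 1) {f : ℂ → ℂ} (hf : classA f)
    (h_le : ∀ z ∈ unitDisk, ‖f (q * z)‖ ≤ ‖f z‖) : SqStar q f := by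
  have h_norm : ‖1 - (q : ℂ)‖ = 1 - q := by
    rw [← ofReal_one, ← ofReal_sub, Complex.norm_of_nonneg (sub_nonneg.2 hq.le)]
  refine ⟨hf, fun z hz => ?_⟩
  by_cases hfz : f z = 0
  · -- Division by zero makes the quotient `0`, which lies on the bounding circle.
    simp [hfz, h_norm]
  have hz₀ : z ≠ 0 := fun h => hfz (h ▸ hf.2.1)
  rw [mul_Dq_div_sub_one_div q hz₀ hfz, norm_div, norm_neg, norm_div, h_norm]
  have : 0 < 1 - q := sub_pos.2 hq
  gcongr
  exact div_le_one_of_le₀ (h_le z hz) (norm_nonneg _)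

lemma classA_mul_exp {H : ℂ → ℂ} (hH : DifferentiableOn ℂ H unitDisk) (hH₀ : H 0 = 0) :
    classA fun z => z * exp (H z) := by
  refine ⟨differentiableOn_id.mul hH.cexp, zero_mul _, ?_⟩
  have h_diff : DifferentiableAt ℂ H 0 :=
    hH.differentiableAt (isOpen_ball.mem_nhds (mem_ball_self one_pos))
  simpa [hH₀] using ((hasDerivAt_id' (0 : ℂ)).fun_mul h_diff.hasDerivAt.cexp).deriv

lemma sqStar_mul_exp {q : ℝ} (hq₀ : 0 < q) (hq₁ : q < 1) {H : ℂ → ℂ}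
    (hH : DifferentiableOn ℂ H unitDisk) (hH₀ : H 0 = 0)
    (h_re : ∀ z ∈ unitDisk, (H (q * z) - H z).re ≤ -Real.log q) :
    SqStar q fun z => z * exp (H z) := by
  refine sqStar_of_norm_le hq₁ (classA_mul_exp hH hH₀) fun z hz => ?_
  have h_exp : Real.log q + (H (q * z)).re ≤ (H z).re := by
    have := h_re z hz
    rw [sub_re] at this
    linarith
  calc ‖q * z * exp (H (q * z))‖
      = ‖z‖ * Real.exp (Real.log q + (H (q * z)).re) := by
        rw [norm_mul, norm_mul, Complex.norm_of_nonneg hq₀.le, norm_exp, Real.exp_add,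
          Real.exp_log hq₀]
        ring
    _ ≤ ‖z‖ * Real.exp (H z).re := by gcongr
    _ = ‖z * exp (H z)‖ := by rw [norm_mul, norm_exp]

lemma sqStar_mul_exp_qLog_pow {q : ℝ} (hq₀ : 0 < q) (hq₁ : q < 1) {m : ℕ} (hm : m ≠ 0) :
    SqStar q fun z => z * exp ((2 * Real.log q : ℝ) * qLog ((q : ℂ) ^ m) (z ^ m)) := by
  have hp : ‖(q : ℂ) ^ m‖ < 1 := by
    rw [norm_pow, Complex.norm_of_nonneg hq₀.le]
    exact pow_lt_one₀ hq₀.le hq₁ hm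
  have h_pow {z : ℂ} (hz : z ∈ unitDisk) : ‖z ^ m‖ < 1 := by
    rw [norm_pow]
    exact pow_lt_one₀ (norm_nonneg z) (mem_ball_zero_iff.1 hz) hm
  refine sqStar_mul_exp hq₀ hq₁ ?_ ?_ fun z hz => ?_
  · exact ((differentiableOn_qLog hp).comp (by fun_prop)
      fun z hz => mem_ball_zero_iff.2 (h_pow hz)).const_mul _
  · rw [zero_pow hm, qLog_zero_right, mul_zero]
  · rw [← mul_sub, mul_pow, qLog_mul_sub_qLog hp (h_pow hz), re_ofReal_mul]
    have h_half := neg_half_lt_re_div_one_sub (h_pow hz)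
    have h_log : Real.log q < 0 := Real.log_neg hq₀ hq₁
    nlinarith

theorem extremal_functions_mem_SqStar_general (q : ℝ) (hq0 : 0 < q) (hq1 : q < 1)
    (m : ℕ) (hm : m ≠ 0) (F : ℂ → ℂ)
    (hF : ∀ z : ℂ, F z = z * Complex.exp
      (∑' n : ℕ, ((2 * Real.log q / (q ^ (m * (n + 1)) - 1) : ℝ) : ℂ) * z ^ (m * (n + 1)))) :
    SqStar q F := by
  convert sqStar_mul_exp_qLog_pow hq0 hq1 hm using 1
  funext z
  rw [hF, qLog, ← tsum_mul_left]
  congr 2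
  refine tsum_congr fun n => ?_
  push_cast
  rw [← pow_mul, ← pow_mul, div_mul_eq_mul_div, mul_div_assoc]

/-- The extremal functions `F₁` and `F₂` are well defined, analytic on the unit
disk, and belong to `S_q^*`. -/
theorem extremal_functions_mem_SqStar (q : ℝ) (hq0 : 0 < q) (hq1 : q < 1)
    (F₁ F₂ : ℂ → ℂ)
    (hF₁ : ∀ z : ℂ, F₁ z =
      z * Complex.exp (∑' n : ℕ, ((2 * Real.log q / (q ^ (n + 1) - 1) : ℝ) : ℂ) * z ^ (n + 1)))
    (hF₂ : ∀ z : ℂ, F₂ z =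
      z * Complex.exp (∑' n : ℕ, ((2 * Real.log q / (q ^ (2 * (n + 1)) - 1) : ℝ) : ℂ) * z ^ (2 * (n + 1)))) :
    SqStar q F₁ ∧ SqStar q F₂ := by
  exact ⟨extremal_functions_mem_SqStar_general q hq0 hq1 1 one_ne_zero F₁
      (by simpa only [one_mul] using hF₁),
    extremal_functions_mem_SqStar_general q hq0 hq1 2 two_ne_zero F₂ hF₂⟩
end
end

section
/- Let 0 < q < 1 and let F₂(z) = z·exp( Σ_{n≥1} (2 ln q/(q^{2n}−1)) z^{2n} ), with Taylor expansion F₂(z) = z + Σ_{n≥2} a_n z^n on the unit disk. Then |a_2 a_4 − a_3²| = 4 (ln q/(q²−1))²; more precisely a_2 = 0, a_4 = 0 and a_3 = 2 ln q/(q²−1). -/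
open Complex Metric

noncomputable section

/-!
`F₂ z = z * g (z ^ 2)` with `g w = exp (w * S w)` and `S w = ∑ cₙ wⁿ`, where `c` is bounded and
hence `S` is analytic at `0`. Uniqueness of Taylor coefficients makes the even coefficients of `F₂`
vanish and gives `a₃ = deriv g 0 = S 0 = c₀`.
-/

open Filter Topology FormalMultilinearSeries

section PowerSeries

lemma hasSum_mul_pow_of_hasSum_sq {R : Type*} [CommSemiring R] [TopologicalSpace R]
    [IsTopologicalSemiring R] {e : ℕ → R} {z s : R}
    (h : HasSum (fun m => e m * (z ^ 2) ^ m) s) :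
    HasSum (fun n => (if Even n then 0 else e (n / 2)) * z ^ n) (z * s) := by
  rw [← zero_add (z * s)]
  refine HasSum.even_add_odd ?_ ?_
  · simp
  · have hdiv (m : ℕ) : (2 * m + 1) / 2 = m := by lia
    convert! h.mul_left z using 2 with m
    simp only [Nat.not_even_two_mul_add_one, if_false, hdiv]
    ring

variable {𝕜 : Type*} [NontriviallyNormedField 𝕜]

lemma hasFPowerSeriesAt_ofScalars_of_eventually_hasSum {a : ℕ → 𝕜} {f : 𝕜 → 𝕜}
    (ha : ∀ᶠ z in 𝓝 0, HasSum (fun n => a n * z ^ n) (f z)) :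
    HasFPowerSeriesAt f (ofScalars 𝕜 a) 0 := by
  rw [hasFPowerSeriesAt_iff]
  simpa [mul_comm] using ha

lemma coeff_eq_of_eventually_hasSum {a b : ℕ → 𝕜} {f : 𝕜 → 𝕜}
    (ha : ∀ᶠ z in 𝓝 0, HasSum (fun n => a n * z ^ n) (f z))
    (hb : ∀ᶠ z in 𝓝 0, HasSum (fun n => b n * z ^ n) (f z)) : a = b :=
  ofScalars_series_injective 𝕜 𝕜 <|
    (hasFPowerSeriesAt_ofScalars_of_eventually_hasSum ha).eq_formalMultilinearSeries
      (hasFPowerSeriesAt_ofScalars_of_eventually_hasSum hb)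

lemma coeff_of_eventually_hasSum_mul_comp_sq {g : 𝕜 → 𝕜} {p : FormalMultilinearSeries 𝕜 𝕜 𝕜}
    (hg : HasFPowerSeriesAt g p 0) {a : ℕ → 𝕜}
    (ha : ∀ᶠ z in 𝓝 0, HasSum (fun n => a n * z ^ n) (z * g (z ^ 2))) (m : ℕ) :
    a (2 * m) = 0 ∧ a (2 * m + 1) = p.coeff m := by
  have hsq : Tendsto (fun z : 𝕜 => z ^ 2) (𝓝 0) (𝓝 0) :=
    (continuous_pow 2).tendsto' 0 0 (zero_pow two_ne_zero)
  have hg_sq : ∀ᶠ z in 𝓝 0, HasSum (fun m => p.coeff m * (z ^ 2) ^ m) (g (z ^ 2)) := by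
    simpa [mul_comm] using hsq.eventually (hasFPowerSeriesAt_iff.1 hg)
  have ha_eq := coeff_eq_of_eventually_hasSum ha (hg_sq.mono fun _ => hasSum_mul_pow_of_hasSum_sq)
  have hdiv : (2 * m + 1) / 2 = m := by lia
  simp [ha_eq, hdiv]

lemma analyticAt_tsum_mul_pow_of_norm_le [CompleteSpace 𝕜] {c : ℕ → 𝕜} {C : ℝ}
    (hc : ∀ n, ‖c n‖ ≤ C) : AnalyticAt 𝕜 (fun w => ∑' n, c n * w ^ n) 0 := by
  have hradius : 0 < (ofScalars 𝕜 c).radius :=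
    zero_lt_one.trans_le <| le_radius_of_bound (r := 1) _ C fun n => by simpa using hc n
  have hsum : (ofScalars 𝕜 c).sum = fun w => ∑' n, c n * w ^ n := ofScalarsSum_eq_tsum c
  exact hsum ▸ ((ofScalars 𝕜 c).hasFPowerSeriesOnBall hradius).analyticAt

end PowerSeries

lemma hasDerivAt_cexp_id_mul_zero {S : ℂ → ℂ} (hS : DifferentiableAt ℂ S 0) :
    HasDerivAt (fun w => exp (w * S w)) (S 0) 0 := by
  simpa using ((hasDerivAt_id (0 : ℂ)).mul hS.hasDerivAt).cexp

lemma coeff_mul_cexp_tsum_even_pow {c : ℕ → ℂ} {C : ℝ} (hc : ∀ n, ‖c n‖ ≤ C) {a : ℕ → ℂ}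
    (ha : ∀ᶠ z in 𝓝 0,
      HasSum (fun n => a n * z ^ n) (z * exp (∑' n, c n * z ^ (2 * (n + 1))))) :
    (∀ m, a (2 * m) = 0) ∧ a 3 = c 0 := by
  set S : ℂ → ℂ := fun w => ∑' n, c n * w ^ n with hS_def
  have hS : AnalyticAt ℂ S 0 := analyticAt_tsum_mul_pow_of_norm_le hc
  have hS_zero : S 0 = c 0 := by
    refine (tsum_eq_single 0 fun n hn => ?_).trans (by simp)
    rw [zero_pow hn, mul_zero]
  have hexponent (z : ℂ) : ∑' n, c n * z ^ (2 * (n + 1)) = z ^ 2 * S (z ^ 2) := by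
    rw [hS_def, ← tsum_mul_left]
    exact tsum_congr fun n => by ring
  obtain ⟨p, hp⟩ : AnalyticAt ℂ (fun w => exp (w * S w)) 0 := (analyticAt_id.mul hS).cexp
  have hp_one : p.coeff 1 = c 0 :=
    hS_zero ▸ hp.hasDerivAt.unique (hasDerivAt_cexp_id_mul_zero hS.differentiableAt)
  simp only [hexponent] at ha
  have hcoeff := coeff_of_eventually_hasSum_mul_comp_sq hp ha
  exact ⟨fun m => (hcoeff m).1, (hcoeff 1).2.trans hp_one⟩

lemma abs_sub_one_le_abs_pow_sub_one {x : ℝ} (hx : 0 ≤ x) {n : ℕ} (hn : n ≠ 0) :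
    |x - 1| ≤ |x ^ n - 1| := by
  have hsum : 1 ≤ ∑ i ∈ Finset.range n, x ^ i := by
    simpa using Finset.single_le_sum (f := fun i => x ^ i) (fun i _ => pow_nonneg hx i)
      (Finset.mem_range.2 (Nat.pos_of_ne_zero hn))
  rw [← geom_sum_mul, abs_mul]
  exact le_mul_of_one_le_left (abs_nonneg _) (hsum.trans (le_abs_self _))

lemma abs_div_pow_sub_one_le {x : ℝ} (hx : 0 ≤ x) (hx1 : x ≠ 1) (b : ℝ) {n : ℕ} (hn : n ≠ 0) :
    |b / (x ^ n - 1)| ≤ |b / (x - 1)| := by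
  rw [abs_div, abs_div]
  exact div_le_div_of_nonneg_left (abs_nonneg b) (abs_pos.2 (sub_ne_zero.2 hx1))
    (abs_sub_one_le_abs_pow_sub_one hx hn)

theorem hankel_extremal_F2_general {q : ℝ} (hq0 : 0 < q) (hq1 : q ≠ 1) {F₂ : ℂ → ℂ}
    (hF₂ : ∀ᶠ z in 𝓝 0, F₂ z = z * exp
      (∑' n : ℕ, ((2 * Real.log q / (q ^ (2 * (n + 1)) - 1) : ℝ) : ℂ) * z ^ (2 * (n + 1))))
    {a : ℕ → ℂ} (ha : ∀ᶠ z in 𝓝 0, HasSum (fun n => a n * z ^ n) (F₂ z)) :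
    a 2 = 0 ∧ a 4 = 0 ∧ a 3 = ((2 * Real.log q / (q ^ 2 - 1) : ℝ) : ℂ) ∧
      ‖a 2 * a 4 - (a 3) ^ 2‖ = 4 * (Real.log q / (q ^ 2 - 1)) ^ 2 := by
  have hsq : q ^ 2 ≠ 1 := by rwa [Ne, pow_eq_one_iff_of_nonneg hq0.le two_ne_zero]
  have hbound (n : ℕ) : ‖((2 * Real.log q / (q ^ (2 * (n + 1)) - 1) : ℝ) : ℂ)‖ ≤
      |2 * Real.log q / (q ^ 2 - 1)| := by
    rw [norm_real, Real.norm_eq_abs, pow_mul]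
    exact abs_div_pow_sub_one_le (sq_nonneg q) hsq _ n.succ_ne_zero
  have hseries := (hF₂.and ha).mono fun z hz => hz.1 ▸ hz.2
  obtain ⟨heven, ha3 : a 3 = ((2 * Real.log q / (q ^ 2 - 1) : ℝ) : ℂ)⟩ :=
    coeff_mul_cexp_tsum_even_pow hbound hseries
  refine ⟨heven 1, heven 2, ha3, ?_⟩
  rw [heven 1, ha3, zero_mul, zero_sub, norm_neg, norm_pow, norm_real, Real.norm_eq_abs, sq_abs]
  ring

/-- Sharpness of the Hankel determinant bound: the coefficients of `F₂` satisfy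
`a₂ = 0`, `a₄ = 0`, `a₃ = 2 ln q/(q²−1)`, so `|a₂a₄ − a₃²| = 4 (ln q/(q²−1))²`. -/
theorem hankel_extremal_F2 (q : ℝ) (hq0 : 0 < q) (hq1 : q < 1)
    (F₂ : ℂ → ℂ)
    (hF₂ : ∀ z : ℂ, F₂ z =
      z * Complex.exp (∑' n : ℕ, ((2 * Real.log q / (q ^ (2 * (n + 1)) - 1) : ℝ) : ℂ) * z ^ (2 * (n + 1))))
    (a : ℕ → ℂ) (ha0 : a 0 = 0) (ha1 : a 1 = 1)
    (ha : ∀ z ∈ unitDisk, HasSum (fun n => a n * z ^ n) (F₂ z)) :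
    a 2 = 0 ∧ a 4 = 0 ∧ a 3 = ((2 * Real.log q / (q ^ 2 - 1) : ℝ) : ℂ) ∧
      ‖a 2 * a 4 - (a 3) ^ 2‖ = 4 * (Real.log q / (q ^ 2 - 1)) ^ 2 := by
  exact hankel_extremal_F2_general hq0 hq1.ne (.of_forall hF₂)
    (eventually_of_mem (ball_mem_nhds 0 one_pos) ha)
end
end

section
/- For every real q with 0 < q < 1, the inequality (ln q/(q−1))⁴ − 3(ln q/(q−1))(ln q/(q³−1)) + 3(ln q/(q²−1))² > 0 holds. -/
/-!
Both `q ^ 2 - 1` and `q ^ 3 - 1` are multiples of `q - 1`, so with `A = log q / (q - 1)` the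
expression equals `A ^ 2 * (A ^ 2 - 3 * q / ((q ^ 2 + q + 1) * (q + 1) ^ 2))`. The logarithmic mean
`1 / A` of `1` and `q` is at most their arithmetic mean, so `A ^ 2 ≥ 4 / (q + 1) ^ 2`, and this
exceeds the subtracted term because `3 * q < 4 * (q ^ 2 + q + 1)`.
-/

section Field

variable {K : Type*} [Field K]

theorem pow_four_sub_three_mul_add_three_mul_sq_eq (a : K) {q : K} (hq : q + 1 ≠ 0)
    (hq' : q ^ 2 + q + 1 ≠ 0) :
    a ^ 4 - 3 * a * (a / (q ^ 2 + q + 1)) + 3 * (a / (q + 1)) ^ 2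
      = a ^ 2 * (a ^ 2 - 3 * q / ((q ^ 2 + q + 1) * (q + 1) ^ 2)) := by
  have : q * (q + 1) + 1 ≠ 0 := by rwa [mul_add_one, ← sq]
  field_simp
  ring

theorem three_mul_div_lt_two_div_add_one_sq [LinearOrder K] [IsStrictOrderedRing K] {q : K}
    (hq : q + 1 ≠ 0) :
    3 * q / ((q ^ 2 + q + 1) * (q + 1) ^ 2) < (2 / (q + 1)) ^ 2 := by
  have quadratic_pos : 0 < q ^ 2 + q + 1 := by nlinarith [sq_nonneg (2 * q + 1)]
  have linear_lt : 3 * q < 2 ^ 2 * (q ^ 2 + q + 1) := by nlinarith [sq_nonneg (8 * q + 1)]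
  rw [← div_div, div_pow]
  gcongr
  rwa [div_lt_iff₀ quadratic_pos]

end Field

section Log

theorem two_div_add_one_le_log_div_sub_one_of_one_lt {x : ℝ} (hx : 1 < x) :
    2 / (x + 1) ≤ Real.log x / (x - 1) := by
  have hx' : 0 < x - 1 := sub_pos.mpr hx
  rw [le_div_iff₀ hx']
  calc 2 / (x + 1) * (x - 1) = 2 * (x - 1) / (x - 1 + 2) := by ring
    _ ≤ Real.log (1 + (x - 1)) := Real.le_log_one_add_of_nonneg hx'.le
    _ = Real.log x := by rw [add_sub_cancel]

theorem two_div_add_one_le_log_div_sub_one {x : ℝ} (hx : 0 < x) (hx₁ : x ≠ 1) :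
    2 / (x + 1) ≤ Real.log x / (x - 1) := by
  rcases hx₁.lt_or_gt with hlt | hgt
  · have hinv := two_div_add_one_le_log_div_sub_one_of_one_lt ((one_lt_inv₀ hx).mpr hlt)
    have left_eq : 2 / (x⁻¹ + 1) = x * (2 / (x + 1)) := by
      field_simp
      ring
    have right_eq : Real.log x⁻¹ / (x⁻¹ - 1) = x * (Real.log x / (x - 1)) := by
      have : x - 1 ≠ 0 := sub_ne_zero.mpr hx₁
      have : 1 - x ≠ 0 := sub_ne_zero.mpr hx₁.symm
      rw [Real.log_inv]
      field_simp
      ring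
    rw [left_eq, right_eq] at hinv
    exact le_of_mul_le_mul_left hinv hx
  · exact two_div_add_one_le_log_div_sub_one_of_one_lt hgt

end Log

theorem log_q_inequality_general {q : ℝ} (hq₀ : 0 < q) (hq₁ : q ≠ 1) :
    0 < (Real.log q / (q - 1)) ^ 4
        - 3 * (Real.log q / (q - 1)) * (Real.log q / (q ^ 3 - 1))
        + 3 * (Real.log q / (q ^ 2 - 1)) ^ 2 := by
  have cube_eq : q ^ 3 - 1 = (q - 1) * (q ^ 2 + q + 1) := by ring
  have sq_eq : q ^ 2 - 1 = (q - 1) * (q + 1) := by ring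
  have hA := two_div_add_one_le_log_div_sub_one hq₀ hq₁
  rw [cube_eq, sq_eq, ← div_div, ← div_div]
  set A := Real.log q / (q - 1)
  have hA_pos : 0 < A := lt_of_lt_of_le (by positivity) hA
  rw [pow_four_sub_three_mul_add_three_mul_sq_eq A (by positivity) (by positivity)]
  refine mul_pos (pow_pos hA_pos 2) (sub_pos.mpr ?_)
  calc 3 * q / ((q ^ 2 + q + 1) * (q + 1) ^ 2)
      < (2 / (q + 1)) ^ 2 := three_mul_div_lt_two_div_add_one_sq (by positivity)
    _ ≤ A ^ 2 := by gcongr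

/-- For `0 < q < 1`, the inequality
`(ln q/(q−1))⁴ − 3(ln q/(q−1))(ln q/(q³−1)) + 3(ln q/(q²−1))² > 0` holds. -/
theorem log_q_inequality (q : ℝ) (hq0 : 0 < q) (hq1 : q < 1) :
    0 < (Real.log q / (q - 1)) ^ 4
        - 3 * (Real.log q / (q - 1)) * (Real.log q / (q ^ 3 - 1))
        + 3 * (Real.log q / (q ^ 2 - 1)) ^ 2 :=
  log_q_inequality_general hq0 hq1.ne
end

section
/- Let p be in the Carathéodory class P with Taylor expansion p(z) = 1 + Σ_{n≥1} p_n zⁿ, and assume p_1 is real with 0 ≤ p_1 ≤ 2. Then there exist complex numbers x and w with |x| ≤ 1 and |w| ≤ 1 such that 2p_2 = p_1² + x(4 − p_1²) and 4p_3 = p_1³ + 2(4 − p_1²)p_1 x − p_1(4 − p_1²)x² + 2(4 − p_1²)(1 − |x|²)w. -/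
open Complex Metric

noncomputable section

/-- The Carathéodory class `P`. -/
def caratheodory (p : ℂ → ℂ) : Prop :=
  DifferentiableOn ℂ p unitDisk ∧ p 0 = 1 ∧ ∀ z ∈ unitDisk, 0 ≤ (p z).re

/-!
The Cayley transform `(p - 1) / (p + 1)` maps the disk into the closed disk and vanishes at `0`, so
by Schwarz's lemma it equals `z φ(z)` with `φ` again bounded by `1`. Two steps of Schur's algorithm,
`φ ↦ φ₁ ↦ φ₂` with `φₖ(z) - φₖ(0) = z φₖ₊₁(z) (1 - conj (φₖ(0)) φₖ(z))`, produce the parameters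
`x = φ₁(0)` and `w = φ₂(0)` in the closed disk. Each of these functional equations is an identity
of formal power series, and comparing coefficients expresses `p₁, p₂, p₃` through `φ(0), x, w`.
-/

open scoped ComplexConjugate ContDiff Nat PowerSeries Topology

lemma coeff_succ_of_sub_C_eq_X_mul {R : Type*} [CommRing R] {F G : R⟦X⟧} {a u v : R}
    (h : F - PowerSeries.C a = PowerSeries.X * (G * (PowerSeries.C u + PowerSeries.C v * F)))
    (n : ℕ) :
    F.coeff (n + 1) =
      u * G.coeff n + v * ∑ i ∈ Finset.range (n + 1), G.coeff i * F.coeff (n - i) := by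
  have h_coeff := congrArg (PowerSeries.coeff (n + 1)) h
  rw [map_sub, PowerSeries.coeff_C, if_neg n.succ_ne_zero, sub_zero, PowerSeries.coeff_succ_X_mul,
    mul_add, mul_comm G, mul_left_comm G, map_add, PowerSeries.coeff_C_mul,
    PowerSeries.coeff_C_mul, PowerSeries.coeff_mul,
    Finset.Nat.sum_antidiagonal_eq_sum_range_succ_mk] at h_coeff
  exact h_coeff

section TaylorPowerSeries

variable {𝕜 : Type*} [NontriviallyNormedField 𝕜] {f g : 𝕜 → 𝕜} {z₀ : 𝕜}

/-- The Taylor series of `f` at `z₀` as a formal power series, so that functional equations become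
equations in the ring `𝕜⟦X⟧`. The division by `n !` is junk in positive characteristic. -/
def taylorPowerSeries (f : 𝕜 → 𝕜) (z₀ : 𝕜) : 𝕜⟦X⟧ :=
  .mk fun n ↦ iteratedDeriv n f z₀ / n !

lemma coeff_taylorPowerSeries (n : ℕ) :
    (taylorPowerSeries f z₀).coeff n = iteratedDeriv n f z₀ / n ! :=
  PowerSeries.coeff_mk _ _

lemma coeff_zero_taylorPowerSeries : (taylorPowerSeries f z₀).coeff 0 = f z₀ := by
  simp [coeff_taylorPowerSeries]

lemma taylorPowerSeries_congr (h : f =ᶠ[𝓝 z₀] g) :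
    taylorPowerSeries f z₀ = taylorPowerSeries g z₀ := by
  ext n
  simp only [coeff_taylorPowerSeries, h.iteratedDeriv_eq]

lemma taylorPowerSeries_const (c : 𝕜) : taylorPowerSeries (fun _ ↦ c) z₀ = PowerSeries.C c := by
  ext n
  rcases eq_or_ne n 0 with rfl | hn <;>
    simp [coeff_taylorPowerSeries, iteratedDeriv_const, PowerSeries.coeff_C, *]

lemma taylorPowerSeries_id :
    taylorPowerSeries (fun z ↦ z) z₀ = PowerSeries.X + PowerSeries.C z₀ := by
  ext (_ | _ | n) <;>
    simp [coeff_taylorPowerSeries, iteratedDeriv_succ', iteratedDeriv_const, PowerSeries.coeff_X]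

lemma taylorPowerSeries_add (hf : ContDiffAt 𝕜 ∞ f z₀) (hg : ContDiffAt 𝕜 ∞ g z₀) :
    taylorPowerSeries (fun z ↦ f z + g z) z₀ =
      taylorPowerSeries f z₀ + taylorPowerSeries g z₀ := by
  ext n
  simp only [coeff_taylorPowerSeries, map_add, add_div,
    iteratedDeriv_fun_add (hf.of_le (mod_cast le_top)) (hg.of_le (mod_cast le_top))]

lemma taylorPowerSeries_sub (hf : ContDiffAt 𝕜 ∞ f z₀) (hg : ContDiffAt 𝕜 ∞ g z₀) :
    taylorPowerSeries (fun z ↦ f z - g z) z₀ =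
      taylorPowerSeries f z₀ - taylorPowerSeries g z₀ := by
  ext n
  simp only [coeff_taylorPowerSeries, map_sub, sub_div,
    iteratedDeriv_fun_sub (hf.of_le (mod_cast le_top)) (hg.of_le (mod_cast le_top))]

lemma taylorPowerSeries_mul [CharZero 𝕜] (hf : ContDiffAt 𝕜 ∞ f z₀) (hg : ContDiffAt 𝕜 ∞ g z₀) :
    taylorPowerSeries (fun z ↦ f z * g z) z₀ =
      taylorPowerSeries f z₀ * taylorPowerSeries g z₀ := by
  ext n
  simp only [coeff_taylorPowerSeries, PowerSeries.coeff_mul,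
    iteratedDeriv_fun_mul (hf.of_le (mod_cast le_top)) (hg.of_le (mod_cast le_top)),
    Finset.Nat.sum_antidiagonal_eq_sum_range_succ_mk, Finset.sum_div]
  refine Finset.sum_congr rfl fun i hi ↦ ?_
  rw [Nat.cast_choose 𝕜 (Finset.mem_range_succ_iff.1 hi)]
  field_simp [Nat.cast_ne_zero.2 n.factorial_ne_zero]

lemma coeff_taylorPowerSeries_of_hasSum [CompleteSpace 𝕜] [CharZero 𝕜] {c : ℕ → 𝕜}
    (h : ∀ᶠ z in 𝓝 0, HasSum (fun n ↦ c n * z ^ n) (f z)) (n : ℕ) :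
    (taylorPowerSeries f 0).coeff n = c n := by
  have hc : HasFPowerSeriesAt f (.ofScalars 𝕜 c) 0 := by
    rw [hasFPowerSeriesAt_iff]
    filter_upwards [h] with z hz
    simpa [mul_comm] using hz
  have series_eq := hc.eq_formalMultilinearSeries hc.analyticAt.hasFPowerSeriesAt
  rw [FormalMultilinearSeries.ofScalars_series_eq_iff] at series_eq
  rw [series_eq, coeff_taylorPowerSeries]

lemma coeff_succ_taylorPowerSeries_of_sub_eq [CharZero 𝕜] {a u v : 𝕜}
    (hf : ContDiffAt 𝕜 ∞ f z₀) (hg : ContDiffAt 𝕜 ∞ g z₀)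
    (h : ∀ᶠ z in 𝓝 z₀, f z - a = (z - z₀) * (g z * (u + v * f z))) (n : ℕ) :
    (taylorPowerSeries f z₀).coeff (n + 1) =
      u * (taylorPowerSeries g z₀).coeff n +
        v * ∑ i ∈ Finset.range (n + 1),
          (taylorPowerSeries g z₀).coeff i * (taylorPowerSeries f z₀).coeff (n - i) := by
  refine coeff_succ_of_sub_C_eq_X_mul (a := a) ?_ n
  have h_series := taylorPowerSeries_congr h
  simpa (disch := fun_prop) only [taylorPowerSeries_sub, taylorPowerSeries_mul,
    taylorPowerSeries_add, taylorPowerSeries_const, taylorPowerSeries_id,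
    add_sub_cancel_right] using h_series

end TaylorPowerSeries

lemma zero_mem_unitDisk : (0 : ℂ) ∈ unitDisk := mem_ball_self one_pos

lemma isOpen_unitDisk : IsOpen unitDisk := isOpen_ball

lemma unitDisk_mem_nhds_zero : unitDisk ∈ 𝓝 (0 : ℂ) := isOpen_unitDisk.mem_nhds zero_mem_unitDisk

lemma norm_sub_le_norm_one_sub_conj_mul {a z : ℂ} (ha : ‖a‖ ≤ 1) (hz : ‖z‖ ≤ 1) :
    ‖z - a‖ ≤ ‖1 - conj a * z‖ := by
  have identity : ‖1 - conj a * z‖ ^ 2 - ‖z - a‖ ^ 2 = (1 - ‖a‖ ^ 2) * (1 - ‖z‖ ^ 2) := by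
    simp only [← normSq_eq_norm_sq, normSq_apply, sub_re, sub_im, mul_re, mul_im, conj_re, conj_im,
      one_re, one_im]
    ring
  have nonneg : 0 ≤ (1 - ‖a‖ ^ 2) * (1 - ‖z‖ ^ 2) :=
    mul_nonneg (sub_nonneg.2 (pow_le_one₀ (norm_nonneg a) ha))
      (sub_nonneg.2 (pow_le_one₀ (norm_nonneg z) hz))
  exact le_of_sq_le_sq (by linarith) (norm_nonneg _)

lemma one_sub_conj_mul_ne_zero {a z : ℂ} (ha : ‖a‖ < 1) (hz : ‖z‖ ≤ 1) : 1 - conj a * z ≠ 0 := by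
  intro h
  have norm_eq : ‖a‖ * ‖z‖ = 1 := by simpa using congrArg norm (sub_eq_zero.1 h).symm
  nlinarith [norm_nonneg a]

lemma norm_sub_one_le_norm_add_one {z : ℂ} (hz : 0 ≤ z.re) : ‖z - 1‖ ≤ ‖z + 1‖ := by
  have identity : ‖z + 1‖ ^ 2 - ‖z - 1‖ ^ 2 = 4 * z.re := by
    simp only [← normSq_eq_norm_sq, normSq_apply, add_re, add_im, sub_re, sub_im, one_re, one_im]
    ring
  exact le_of_sq_le_sq (by linarith) (norm_nonneg _)

lemma add_one_ne_zero_of_re_nonneg {z : ℂ} (hz : 0 ≤ z.re) : z + 1 ≠ 0 := by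
  intro h
  have re_eq := congrArg re h
  simp only [add_re, one_re, zero_re] at re_eq
  linarith

/-- A Schur function: a holomorphic function from the unit disk to the closed unit disk. -/
structure IsSchurFunction (f : ℂ → ℂ) : Prop where
  differentiableOn : DifferentiableOn ℂ f unitDisk
  norm_le_one : ∀ z ∈ unitDisk, ‖f z‖ ≤ 1

lemma contDiffAt_zero_of_differentiableOn_unitDisk {f : ℂ → ℂ}
    (hf : DifferentiableOn ℂ f unitDisk) : ContDiffAt ℂ ∞ f 0 :=
  (hf.analyticAt unitDisk_mem_nhds_zero).contDiffAt

namespace IsSchurFunction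

variable {f : ℂ → ℂ}

lemma exists_eq_mul (hf : IsSchurFunction f) (h0 : f 0 = 0) :
    ∃ g, IsSchurFunction g ∧ ∀ z, f z = z * g z := by
  refine ⟨dslope f 0, ⟨?_, fun z hz ↦ ?_⟩, fun z ↦ ?_⟩
  · exact (differentiableOn_dslope unitDisk_mem_nhds_zero).2 hf.differentiableOn
  · have maps : Set.MapsTo f (ball 0 1) (closedBall (f 0) 1) := fun y hy ↦ by
      simpa [h0] using hf.norm_le_one y hy
    simpa using norm_dslope_le_div_of_mapsTo_ball hf.differentiableOn maps hz
  · simpa [h0] using (sub_smul_dslope f 0 z).symm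

lemma eqOn_const_of_norm_eq_one (hf : IsSchurFunction f) (h0 : ‖f 0‖ = 1) :
    Set.EqOn f (Function.const ℂ (f 0)) unitDisk :=
  eqOn_of_isPreconnected_of_isMaxOn_norm (convex_ball 0 1).isPreconnected isOpen_unitDisk
    hf.differentiableOn zero_mem_unitDisk fun z hz ↦ by simpa [h0] using hf.norm_le_one z hz

lemma mobius_comp (hf : IsSchurFunction f) {a : ℂ} (ha : ‖a‖ < 1) :
    IsSchurFunction fun z ↦ (f z - a) / (1 - conj a * f z) where
  differentiableOn := (hf.differentiableOn.sub_const a).div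
    ((differentiableOn_const 1).sub (hf.differentiableOn.const_mul _))
    fun z hz ↦ one_sub_conj_mul_ne_zero ha (hf.norm_le_one z hz)
  norm_le_one z hz := by
    rw [norm_div]
    exact div_le_one_of_le₀ (norm_sub_le_norm_one_sub_conj_mul ha.le (hf.norm_le_one z hz))
      (norm_nonneg _)

lemma exists_schur_transform (hf : IsSchurFunction f) :
    ∃ g, IsSchurFunction g ∧
      ∀ z ∈ unitDisk, f z - f 0 = z * g z * (1 - conj (f 0) * f z) := by
  rcases (hf.norm_le_one 0 zero_mem_unitDisk).eq_or_lt with h1 | hlt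
  · refine ⟨fun _ ↦ 0, ⟨differentiableOn_const 0, by simp⟩, fun z hz ↦ ?_⟩
    simp [hf.eqOn_const_of_norm_eq_one h1 hz]
  · obtain ⟨g, hg, hfg⟩ := (hf.mobius_comp hlt).exists_eq_mul (by simp)
    refine ⟨g, hg, fun z hz ↦ ?_⟩
    rw [← hfg, div_mul_cancel₀ _ (one_sub_conj_mul_ne_zero hlt (hf.norm_le_one z hz))]

lemma contDiffAt_zero (hf : IsSchurFunction f) : ContDiffAt ℂ ∞ f 0 :=
  contDiffAt_zero_of_differentiableOn_unitDisk hf.differentiableOn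

lemma exists_coeff_eq (hf : IsSchurFunction f) :
    ∃ g, IsSchurFunction g ∧
      (taylorPowerSeries f 0).coeff 1 = (1 - ‖f 0‖ ^ 2) * g 0 ∧
      (taylorPowerSeries f 0).coeff 2 =
        (1 - ‖f 0‖ ^ 2) * ((taylorPowerSeries g 0).coeff 1 - conj (f 0) * g 0 ^ 2) := by
  obtain ⟨g, hg, hfg⟩ := hf.exists_schur_transform
  have recursion := coeff_succ_taylorPowerSeries_of_sub_eq (a := f 0) (u := 1) (v := -conj (f 0))
    hf.contDiffAt_zero hg.contDiffAt_zero <| by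
      filter_upwards [unitDisk_mem_nhds_zero] with z hz
      linear_combination hfg z hz
  have c1 := recursion 0
  have c2 := recursion 1
  simp only [zero_add, Nat.reduceAdd, Nat.reduceSub, Finset.sum_range_succ, Finset.sum_range_zero,
    coeff_zero_taylorPowerSeries] at c1 c2
  refine ⟨g, hg, ?_, ?_⟩
  · rw [← conj_mul']
    linear_combination c1
  · rw [← conj_mul']
    linear_combination c2 - conj (f 0) * g 0 * c1

lemma exists_coeff_eq_of_schur_parameters (hf : IsSchurFunction f) :
    ∃ x w : ℂ, ‖x‖ ≤ 1 ∧ ‖w‖ ≤ 1 ∧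
      (taylorPowerSeries f 0).coeff 1 = (1 - ‖f 0‖ ^ 2) * x ∧
      (taylorPowerSeries f 0).coeff 2 =
        (1 - ‖f 0‖ ^ 2) * ((1 - ‖x‖ ^ 2) * w - conj (f 0) * x ^ 2) := by
  obtain ⟨g, hg, hf1, hf2⟩ := hf.exists_coeff_eq
  obtain ⟨h, hh, hg1, -⟩ := hg.exists_coeff_eq
  exact ⟨g 0, h 0, hg.norm_le_one 0 zero_mem_unitDisk, hh.norm_le_one 0 zero_mem_unitDisk, hf1,
    hg1 ▸ hf2⟩

end IsSchurFunction

namespace caratheodory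

variable {p : ℂ → ℂ}

lemma isSchurFunction_cayley (hp : caratheodory p) :
    IsSchurFunction fun z ↦ (p z - 1) / (p z + 1) where
  differentiableOn := (hp.1.sub_const 1).div (hp.1.add_const 1)
    fun z hz ↦ add_one_ne_zero_of_re_nonneg (hp.2.2 z hz)
  norm_le_one z hz := by
    rw [norm_div]
    exact div_le_one_of_le₀ (norm_sub_one_le_norm_add_one (hp.2.2 z hz)) (norm_nonneg _)

lemma exists_isSchurFunction_sub_one_eq (hp : caratheodory p) :
    ∃ f, IsSchurFunction f ∧ ∀ z ∈ unitDisk, p z - 1 = z * f z * (p z + 1) := by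
  obtain ⟨f, hf, hpf⟩ := hp.isSchurFunction_cayley.exists_eq_mul (by simp [hp.2.1])
  refine ⟨f, hf, fun z hz ↦ ?_⟩
  rw [← hpf, div_mul_cancel₀ _ (add_one_ne_zero_of_re_nonneg (hp.2.2 z hz))]

lemma exists_isSchurFunction_coeff_eq (hp : caratheodory p) :
    ∃ f, IsSchurFunction f ∧
      (taylorPowerSeries p 0).coeff 1 = 2 * f 0 ∧
      (taylorPowerSeries p 0).coeff 2 = 2 * ((taylorPowerSeries f 0).coeff 1 + f 0 ^ 2) ∧
      (taylorPowerSeries p 0).coeff 3 =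
        2 * ((taylorPowerSeries f 0).coeff 2 + 2 * f 0 * (taylorPowerSeries f 0).coeff 1 +
          f 0 ^ 3) := by
  obtain ⟨f, hf, hpf⟩ := hp.exists_isSchurFunction_sub_one_eq
  have recursion := coeff_succ_taylorPowerSeries_of_sub_eq (a := 1) (u := 1) (v := 1)
    (contDiffAt_zero_of_differentiableOn_unitDisk hp.1) hf.contDiffAt_zero <| by
      filter_upwards [unitDisk_mem_nhds_zero] with z hz
      linear_combination hpf z hz
  have c1 := recursion 0
  have c2 := recursion 1
  have c3 := recursion 2
  simp only [zero_add, Nat.reduceAdd, Nat.reduceSub, Finset.sum_range_succ, Finset.sum_range_zero,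
    coeff_zero_taylorPowerSeries, hp.2.1] at c1 c2 c3
  refine ⟨f, hf, ?_, ?_, ?_⟩
  · linear_combination c1
  · linear_combination c2 + f 0 * c1
  · linear_combination c3 + f 0 * c2 + ((taylorPowerSeries f 0).coeff 1 + f 0 ^ 2) * c1

end caratheodory

theorem caratheodory_p2_p3_general {p : ℂ → ℂ} (hp : caratheodory p) {pc : ℕ → ℂ}
    (hpc : ∀ z ∈ unitDisk, HasSum (fun n ↦ pc n * z ^ n) (p z)) :
    ∃ x w : ℂ, ‖x‖ ≤ 1 ∧ ‖w‖ ≤ 1 ∧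
      2 * pc 2 = pc 1 ^ 2 + x * (4 - ‖pc 1‖ ^ 2) ∧
      4 * pc 3 = pc 1 ^ 3 + 2 * (4 - ‖pc 1‖ ^ 2) * pc 1 * x
        - conj (pc 1) * (4 - ‖pc 1‖ ^ 2) * x ^ 2
        + 2 * (4 - ‖pc 1‖ ^ 2) * (1 - ‖x‖ ^ 2) * w := by
  obtain ⟨f, hf, hp1, hp2, hp3⟩ := hp.exists_isSchurFunction_coeff_eq
  obtain ⟨x, w, hx, hw, hf1, hf2⟩ := hf.exists_coeff_eq_of_schur_parameters
  have coeff_eq := coeff_taylorPowerSeries_of_hasSum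
    (Filter.eventually_of_mem unitDisk_mem_nhds_zero hpc)
  simp only [coeff_eq, hf1, hf2] at hp1 hp2 hp3
  refine ⟨x, w, hx, hw, ?_, ?_⟩
  · simp only [hp1, hp2, norm_mul, norm_ofNat, ofReal_mul, ofReal_ofNat]
    ring
  · simp only [hp1, hp3, norm_mul, norm_ofNat, ofReal_mul, ofReal_ofNat, map_mul, map_ofNat]
    ring

/-- Libera–Złotkiewicz representation of the coefficients `p₂, p₃` of a
Carathéodory function with `p₁ ∈ [0,2]` real. -/
theorem caratheodory_p2_p3 (p : ℂ → ℂ) (hp : caratheodory p)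
    (pc : ℕ → ℂ) (hpc0 : pc 0 = 1)
    (hpc : ∀ z ∈ unitDisk, HasSum (fun n => pc n * z ^ n) (p z))
    (hp1_real : (pc 1).im = 0) (hp1_lb : 0 ≤ (pc 1).re) (hp1_ub : (pc 1).re ≤ 2) :
    ∃ x w : ℂ, ‖x‖ ≤ 1 ∧ ‖w‖ ≤ 1 ∧
      2 * pc 2 = pc 1 ^ 2 + x * (4 - pc 1 ^ 2) ∧
      4 * pc 3 = pc 1 ^ 3 + 2 * (4 - pc 1 ^ 2) * pc 1 * x
        - pc 1 * (4 - pc 1 ^ 2) * x ^ 2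
        + 2 * (4 - pc 1 ^ 2) * (1 - ((‖x‖ : ℝ) : ℂ) ^ 2) * w := by
  have conj_eq : conj (pc 1) = pc 1 := conj_eq_iff_im.2 hp1_real
  simpa only [conj_eq, ← conj_mul', ← sq] using caratheodory_p2_p3_general hp hpc
end
end
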